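/- Popoviciu's inequality for quasi-arithmetic means (increasing case): let φ be continuous strictly monotone on an interval I ⊆ ℝ, ψ continuous strictly increasing on an interval J ⊆ ℝ, and f : I → J an (M_φ, M_ψ)-convex function. Then for all x, y, z ∈ I: ψ⁻¹( (1/2)·( ψ(ψ⁻¹((ψ(f(x))+ψ(f(y))+ψ(f(z)))/3)) + ψ(f(φ⁻¹((φ(x)+φ(y)+φ(z))/3))) ) ) ≥ ψ⁻¹( (1/3)·( ψ(f(M_φ(x,y))) + ψ(f(M_φ(y,z))) + ψ(f(M_φ(z,x))) ) ), where M_φ(x,y) = φ⁻¹((φ(x)+φ(y))/2). -/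

import Mathlib

/-- A continuous midpoint-convex function on a convex set of reals is convex. -/
theorem convexOn_of_continuousOn_of_midpoint_le {K : Set ℝ} {g : ℝ → ℝ} (hK : Convex ℝ K)
    (hg : ContinuousOn g K)
    (hmid : ∀ u ∈ K, ∀ v ∈ K, g ((u + v) / 2) ≤ (g u + g v) / 2) : ConvexOn ℝ K g := by
  refine ⟨hK, fun u hu v hv a b ha hb hab => ?_⟩
  have hmem : ∀ t ∈ Set.Icc (0 : ℝ) 1, (1 - t) * u + t * v ∈ K := fun t ht =>
    hK hu hv (by linarith [ht.2]) ht.1 (by ring)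
  -- the defect of `g` against its chord, as a function of the weight of `v`
  set h : ℝ → ℝ := fun t => g ((1 - t) * u + t * v) - ((1 - t) * g u + t * g v) with hh
  have hc : ContinuousOn h (Set.Icc 0 1) :=
    (hg.comp (by fun_prop) hmem).sub (by fun_prop)
  have h0 : h 0 = 0 := by simp [hh]
  have h1 : h 1 = 0 := by simp [hh]
  have hm : ∀ s ∈ Set.Icc (0 : ℝ) 1, ∀ t ∈ Set.Icc (0 : ℝ) 1,
      h ((s + t) / 2) ≤ (h s + h t) / 2 := by
    intro s hs t ht
    have := hmid _ (hmem s hs) _ (hmem t ht)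
    have e : ((1 - s) * u + s * v + ((1 - t) * u + t * v)) / 2
        = (1 - (s + t) / 2) * u + (s + t) / 2 * v := by ring
    rw [e] at this
    simp only [hh]
    linarith
  obtain ⟨t₀, ht₀, hmax⟩ := isCompact_Icc.exists_isMaxOn (Set.nonempty_Icc.2 zero_le_one) hc
  have hle : h t₀ ≤ 0 := by
    by_contra! hpos
    have hS : IsCompact (Set.Icc (0 : ℝ) 1 ∩ h ⁻¹' {h t₀}) :=
      isCompact_Icc.of_isClosed_subset
        (hc.preimage_isClosed_of_isClosed isClosed_Icc isClosed_singleton) Set.inter_subset_left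
    obtain ⟨t₁, ⟨ht₁, he⟩, hleast⟩ := hS.exists_isLeast ⟨t₀, ht₀, rfl⟩
    have he : h t₁ = h t₀ := he
    have hl : 0 < t₁ := lt_of_le_of_ne ht₁.1 (by rintro rfl; linarith)
    have hr : t₁ < 1 := lt_of_le_of_ne ht₁.2 (by rintro rfl; linarith)
    set δ := min t₁ (1 - t₁)
    have hδ : 0 < δ := lt_min hl (by linarith)
    have hδl : δ ≤ t₁ := min_le_left _ _
    have hδr : δ ≤ 1 - t₁ := min_le_right _ _
    have hs : t₁ - δ ∈ Set.Icc (0 : ℝ) 1 := ⟨by linarith, by linarith⟩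
    have ht : t₁ + δ ∈ Set.Icc (0 : ℝ) 1 := ⟨by linarith, by linarith⟩
    have hm' := hm _ hs _ ht
    rw [show (t₁ - δ + (t₁ + δ)) / 2 = t₁ by ring] at hm'
    have hA : h (t₁ - δ) ≤ h t₀ := hmax hs
    have hB : h (t₁ + δ) ≤ h t₀ := hmax ht
    have : t₁ ≤ t₁ - δ := hleast ⟨hs, show h (t₁ - δ) = h t₀ by linarith⟩
    linarith
  have hb1 : h b ≤ h t₀ := hmax ⟨hb, by linarith⟩
  obtain rfl : a = 1 - b := by linarith
  simp only [smul_eq_mul]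
  simp only [hh] at hb1 hle
  linarith

/-- Popoviciu's inequality when `x` and `y` lie on the same side of the barycenter. -/
theorem ConvexOn.popoviciu_of_same_side {K : Set ℝ} {g : ℝ → ℝ} (hg : ConvexOn ℝ K g)
    {x y z : ℝ} (hx : x ∈ K) (hy : y ∈ K) (hz : z ∈ K) (hm : (x + y + z) / 3 ∈ K)
    (hside : 0 ≤ (x - (x + y + z) / 3) * (y - (x + y + z) / 3)) :
    (g ((x + y) / 2) + g ((y + z) / 2) + g ((z + x) / 2)) / 3 ≤
      ((g x + g y + g z) / 3 + g ((x + y + z) / 3)) / 2 := by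
  obtain ⟨m, hmdef⟩ : ∃ m, m = (x + y + z) / 3 := ⟨_, rfl⟩
  rw [← hmdef] at hm hside ⊢
  have hxy : g ((x + y) / 2) ≤ (g x + g y) / 2 := by
    have := hg.2 hx hy (show (0 : ℝ) ≤ 1 / 2 by norm_num) (show (0 : ℝ) ≤ 1 / 2 by norm_num)
      (by norm_num)
    simp only [smul_eq_mul] at this
    rw [show (x + y) / 2 = 1 / 2 * x + 1 / 2 * y by ring]
    linarith
  rcases eq_or_ne z m with rfl | hne
  · have hxz : x = z := by nlinarith [sq_nonneg (x - z)]
    have hyz : y = z := by linarith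
    subst hxz hyz
    simp only [add_self_div_two]
    linarith
  · have hd : z - m ≠ 0 := sub_ne_zero.2 hne
    have hsq : 0 < (z - m) ^ 2 := by positivity
    have hz' : z - m = (m - x) + (m - y) := by linarith
    have key : ∀ w, 0 ≤ (m - w) * (z - m) → (m - w) * (z - m) ≤ (z - m) ^ 2 →
        g (m + (m - w) / 2) ≤
          (1 - (m - w) / (z - m) / 2) * g m + (m - w) / (z - m) / 2 * g z := by
      intro w h1 h2
      have e : (m - w) / (z - m) = (m - w) * (z - m) / (z - m) ^ 2 := by field_simp
      have h1' : 0 ≤ (m - w) / (z - m) := by rw [e]; positivity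
      have h2' : (m - w) / (z - m) ≤ 1 := by rw [e]; exact (div_le_one hsq).2 h2
      have := hg.2 hm hz (show 0 ≤ 1 - (m - w) / (z - m) / 2 by linarith)
        (show 0 ≤ (m - w) / (z - m) / 2 by linarith) (by ring)
      simp only [smul_eq_mul] at this
      rwa [show (1 - (m - w) / (z - m) / 2) * m + (m - w) / (z - m) / 2 * z
        = m + (m - w) / 2 by field_simp; ring] at this
    have kx := key x (by rw [hz']; nlinarith [sq_nonneg (m - x)])
      (by rw [hz']; nlinarith [sq_nonneg (m - y)])
    have ky := key y (by rw [hz']; nlinarith [sq_nonneg (m - y)])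
      (by rw [hz']; nlinarith [sq_nonneg (m - x)])
    have hsum : (m - y) / (z - m) = 1 - (m - x) / (z - m) := by
      field_simp
      linarith
    rw [hsum] at ky
    rw [show (y + z) / 2 = m + (m - x) / 2 by linarith,
      show (z + x) / 2 = m + (m - y) / 2 by linarith]
    linarith

/-- Popoviciu's inequality for convex functions of a real variable. -/
theorem ConvexOn.popoviciu {K : Set ℝ} {g : ℝ → ℝ} (hg : ConvexOn ℝ K g)
    {x y z : ℝ} (hx : x ∈ K) (hy : y ∈ K) (hz : z ∈ K) (hm : (x + y + z) / 3 ∈ K) :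
    (g ((x + y) / 2) + g ((y + z) / 2) + g ((z + x) / 2)) / 3 ≤
      ((g x + g y + g z) / 3 + g ((x + y + z) / 3)) / 2 := by
  have e₁ : y + z + x = x + y + z := by ring
  have e₂ : z + x + y = x + y + z := by ring
  by_cases h₁ : 0 ≤ (x - (x + y + z) / 3) * (y - (x + y + z) / 3)
  · exact hg.popoviciu_of_same_side hx hy hz hm h₁
  by_cases h₂ : 0 ≤ (y - (x + y + z) / 3) * (z - (x + y + z) / 3)
  · have := hg.popoviciu_of_same_side hy hz hx (by rwa [e₁]) (by rwa [e₁])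
    rw [e₁] at this
    linarith
  have h₃ : 0 ≤ (z - (x + y + z) / 3) * (x - (x + y + z) / 3) := by
    by_contra! h₃
    push Not at h₁ h₂
    nlinarith [mul_pos_of_neg_of_neg h₁ h₂, sq_nonneg (y - (x + y + z) / 3)]
  have := hg.popoviciu_of_same_side hz hx hy (by rwa [e₂]) (by rwa [e₂])
  rw [e₂] at this
  linarith

/-- A left inverse of a continuous strictly increasing function on an interval is continuous on
the image of the interval. -/
theorem StrictMonoOn.continuousOn_leftInvOn {I : Set ℝ} {φ φinv : ℝ → ℝ}
    (hφ : StrictMonoOn φ I) (hI : Convex ℝ I) (hφc : ContinuousOn φ I)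
    (hinv : Set.LeftInvOn φinv φ I) : ContinuousOn φinv (φ '' I) := by
  have : I.OrdConnected := hI.ordConnected
  have : (φ '' I).OrdConnected := (hI.isPreconnected.image φ hφc).ordConnected
  rw [continuousOn_iff_continuous_domRestrict]
  have hc : Continuous fun s => ((hφ.orderIso φ I).symm s : ℝ) :=
    continuous_subtype_val.comp (hφ.orderIso φ I).symm.continuous
  convert hc using 1
  funext s
  obtain ⟨x, rfl⟩ := (hφ.orderIso φ I).surjective s
  rw [OrderIso.symm_apply_apply]
  exact hinv x.2

/-- A left inverse of a continuous strictly decreasing function on an interval is continuous on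
the image of the interval. -/
theorem StrictAntiOn.continuousOn_leftInvOn {I : Set ℝ} {φ φinv : ℝ → ℝ}
    (hφ : StrictAntiOn φ I) (hI : Convex ℝ I) (hφc : ContinuousOn φ I)
    (hinv : Set.LeftInvOn φinv φ I) : ContinuousOn φinv (φ '' I) := by
  have hc := StrictMonoOn.continuousOn_leftInvOn (φ := fun x => -φ x)
    (φinv := fun s => φinv (-s)) (fun x hx y hy hxy => neg_lt_neg (hφ hx hy hxy)) hI hφc.neg
    (fun x hx => by simpa using hinv hx)
  have := hc.comp (f := fun s => -s) (s := φ '' I) (by fun_prop)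
    (by rintro _ ⟨x, hx, rfl⟩; exact ⟨x, hx, rfl⟩)
  simpa [Function.comp_def] using this


/-- Popoviciu's inequality for quasi-arithmetic means (increasing case). -/
theorem popoviciu_quasi_arithmetic_increasing (I J : Set ℝ) (hI : Convex ℝ I)
    (hJ : Convex ℝ J) (φ ψ f φinv ψinv : ℝ → ℝ)
    (hφc : ContinuousOn φ I) (hφm : StrictMonoOn φ I ∨ StrictAntiOn φ I)
    (hψc : ContinuousOn ψ J) (hψm : StrictMonoOn ψ J)
    (hfc : ContinuousOn f I) (hfm : Set.MapsTo f I J)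
    (hφinv : ∀ x ∈ I, φinv (φ x) = x) (hφinvm : Set.MapsTo φinv (φ '' I) I)
    (hψinv : ∀ y ∈ J, ψinv (ψ y) = y) (hψinvm : Set.MapsTo ψinv (ψ '' J) J)
    (hconv : ∀ x ∈ I, ∀ y ∈ I,
      f (φinv ((φ x + φ y) / 2)) ≤ ψinv ((ψ (f x) + ψ (f y)) / 2)) :
    ∀ x ∈ I, ∀ y ∈ I, ∀ z ∈ I,
      ψinv ((1 / 2) * (ψ (ψinv ((ψ (f x) + ψ (f y) + ψ (f z)) / 3)) +
          ψ (f (φinv ((φ x + φ y + φ z) / 3))))) ≥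
        ψinv ((1 / 3) * (ψ (f (φinv ((φ x + φ y) / 2))) +
          ψ (f (φinv ((φ y + φ z) / 2))) + ψ (f (φinv ((φ z + φ x) / 2))))) := by
  have hφL : Set.LeftInvOn φinv φ I := fun x hx => hφinv x hx
  have hφinvc : ContinuousOn φinv (φ '' I) :=
    hφm.elim (fun h => h.continuousOn_leftInvOn hI hφc hφL)
      (fun h => h.continuousOn_leftInvOn hI hφc hφL)
  have hK : Convex ℝ (φ '' I) := (hI.isPreconnected.image φ hφc).ordConnected.convex
  have hL : Convex ℝ (ψ '' J) := (hJ.isPreconnected.image ψ hψc).ordConnected.convex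
  have hψψ : ∀ t ∈ ψ '' J, ψ (ψinv t) = t := by
    rintro _ ⟨y, hy, rfl⟩
    rw [hψinv y hy]
  have mid : ∀ {S : Set ℝ}, Convex ℝ S → ∀ {a b : ℝ}, a ∈ S → b ∈ S → (a + b) / 2 ∈ S := by
    intro S hS a b ha hb
    rw [show (a + b) / 2 = (1 / 2 : ℝ) • a + (1 / 2 : ℝ) • b by simp only [smul_eq_mul]; ring]
    exact hS ha hb (by norm_num) (by norm_num) (by norm_num)
  have third : ∀ {S : Set ℝ}, Convex ℝ S → ∀ {a b c : ℝ}, a ∈ S → b ∈ S → c ∈ S →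
      (a + b + c) / 3 ∈ S := by
    intro S hS a b c ha hb hc
    rw [show (a + b + c) / 3 = (2 / 3 : ℝ) • ((a + b) / 2) + (1 / 3 : ℝ) • c by
      simp only [smul_eq_mul]; ring]
    exact hS (mid hS ha hb) hc (by norm_num) (by norm_num) (by norm_num)
  have hfJ : ∀ s ∈ φ '' I, f (φinv s) ∈ J := fun s hs => hfm (hφinvm hs)
  have hgL : ∀ s ∈ φ '' I, ψ (f (φinv s)) ∈ ψ '' J := fun s hs => ⟨_, hfJ s hs, rfl⟩
  have hconvex : ConvexOn ℝ (φ '' I) fun s => ψ (f (φinv s)) := by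
    refine convexOn_of_continuousOn_of_midpoint_le hK
      (hψc.comp (hfc.comp hφinvc hφinvm) hfJ) ?_
    intro u hu v hv
    have huv := mid hL (hgL u hu) (hgL v hv)
    obtain ⟨x, hx, rfl⟩ := hu
    obtain ⟨y, hy, rfl⟩ := hv
    simp only [hφinv x hx, hφinv y hy] at huv ⊢
    rw [← hψψ _ huv]
    exact hψm.monotoneOn (hfJ _ (mid hK ⟨x, hx, rfl⟩ ⟨y, hy, rfl⟩)) (hψinvm huv)
      (hconv x hx y hy)
  intro x hx y hy z hz
  have hx' : φ x ∈ φ '' I := ⟨x, hx, rfl⟩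
  have hy' : φ y ∈ φ '' I := ⟨y, hy, rfl⟩
  have hz' : φ z ∈ φ '' I := ⟨z, hz, rfl⟩
  have hm := third hK hx' hy' hz'
  have hψm3 : (ψ (f x) + ψ (f y) + ψ (f z)) / 3 ∈ ψ '' J :=
    third hL ⟨_, hfm hx, rfl⟩ ⟨_, hfm hy, rfl⟩ ⟨_, hfm hz, rfl⟩
  have hpop := hconvex.popoviciu hx' hy' hz' hm
  simp only [hφinv x hx, hφinv y hy, hφinv z hz] at hpop
  rw [hψψ _ hψm3, one_div_mul_eq_div, one_div_mul_eq_div, ge_iff_le]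
  have hleft := third hL (hgL _ (mid hK hx' hy')) (hgL _ (mid hK hy' hz'))
    (hgL _ (mid hK hz' hx'))
  have hright := mid hL hψm3 (hgL _ hm)
  rw [← hψψ _ hleft, ← hψψ _ hright] at hpop
  exact (hψm.le_iff_le (hψinvm hleft) (hψinvm hright)).1 hpop
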